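/- arXiv:2105.03805 — 4 statements merged into one kernel-verified Lean document; each statement's English description precedes it below -/
import Mathlib

section
/- Let λ ∈ ℝ and let n ≥ 2 be an integer. Suppose h ∈ C²((0,L)) satisfies 2r²h(r)h''(r) = (n-1)h(r)(h(r)-1) + r h'(r)(r h'(r) - λr - (n-1)) with h(r) > 0 on (0,L), where L ∈ (0,∞) is a constant with L < -(n-1)/λ in case λ < 0. Then there exists a constant c₁ > 0 such that h(r) ≥ c₁ for all r ∈ [L/2, L). -/
open Set Filter Topology

theorem uniform_lower_bound (lam : ℝ) (n : ℕ) (hn2 : 2 ≤ n) (L : ℝ) (hL : 0 < L)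
    (hLlam : lam < 0 → L < -((n : ℝ) - 1) / lam) (h : ℝ → ℝ)
    (hreg : ContDiffOn ℝ 2 h (Set.Ioo 0 L))
    (hode : ∀ r ∈ Set.Ioo (0 : ℝ) L,
      2 * r ^ 2 * h r * deriv (deriv h) r =
        ((n : ℝ) - 1) * h r * (h r - 1) +
          r * deriv h r * (r * deriv h r - lam * r - ((n : ℝ) - 1)))
    (hpos : ∀ r ∈ Set.Ioo (0 : ℝ) L, 0 < h r) :
    ∃ c₁ : ℝ, 0 < c₁ ∧ ∀ r ∈ Set.Ico (L / 2) L, c₁ ≤ h r := by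
  have hM : (1:ℝ) ≤ (n:ℝ) - 1 := by
    have : (2:ℝ) ≤ n := by exact_mod_cast hn2
    linarith
  generalize (n:ℝ) - 1 = M at *
  have hα : 0 < lam + M / L := by
    have h1 : 0 < lam * L + M := by
      rcases lt_or_ge lam 0 with hl | hl
      · have h2 := hLlam hl
        rw [lt_div_iff_of_neg hl] at h2
        linarith
      · positivity
    have : lam + M / L = (lam * L + M) / L := by field_simp
    rw [this]; positivity
  set α := lam + M / L with hαdef
  have hd1 : ∀ r ∈ Ioo 0 L, HasDerivAt h (deriv h r) r := fun r hr =>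
    ((hreg.differentiableOn (by norm_num)).differentiableAt (isOpen_Ioo.mem_nhds hr)).hasDerivAt
  have hd2 : ∀ r ∈ Ioo 0 L, HasDerivAt (deriv h) (deriv (deriv h) r) r := fun r hr =>
    (((hreg.deriv_of_isOpen (m := 1) isOpen_Ioo (by norm_num)).differentiableOn
      (by norm_num)).differentiableAt (isOpen_Ioo.mem_nhds hr)).hasDerivAt
  have hK : ∀ r ∈ Ioo 0 L, HasDerivAt (fun r => (deriv h r - (lam + M / r)) / √(h r))
      (M * (h r + 1) / (2 * r ^ 2 * √(h r))) r := by
    intro r hr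
    have hp := hpos r hr
    have hr0 : r ≠ 0 := hr.1.ne'
    have hs : 0 < √(h r) := Real.sqrt_pos.2 hp
    have hsq : √(h r) ^ 2 = h r := Real.sq_sqrt hp.le
    have ha : HasDerivAt (fun r : ℝ => lam + M / r) (-M / r ^ 2) r := by
      have := ((hasDerivAt_inv hr0).const_mul M).const_add lam
      simp only [div_eq_mul_inv]
      exact this.congr_deriv (by ring)
    have := ((hd2 r hr).sub ha).div ((hd1 r hr).sqrt hp.ne') hs.ne'
    refine this.congr_deriv ?_
    simp only [Pi.sub_apply]
    have ho := hode r hr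
    generalize deriv (deriv h) r = q at *
    generalize deriv h r = p at *
    generalize √(h r) = s at *
    rw [← hsq] at ho ⊢
    have hs0 := hs.ne'
    have hq : q = (M * s ^ 2 * (s ^ 2 - 1) + r * p * (r * p - lam * r - M)) / (2 * r ^ 2 * s ^ 2) := by
      field_simp
      linarith
    rw [hq]
    field_simp
    ring
  have hmono : MonotoneOn (fun r => (deriv h r - (lam + M / r)) / √(h r)) (Ioo 0 L) := by
    apply monotoneOn_of_deriv_nonneg (convex_Ioo 0 L)
    · exact fun r hr => (hK r hr).continuousAt.continuousWithinAt
    · rw [interior_Ioo]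
      exact fun r hr => (hK r hr).differentiableAt.differentiableWithinAt
    · rw [interior_Ioo]
      intro r hr
      rw [(hK r hr).deriv]
      have := hpos r hr
      positivity
  have hmid : L / 2 ∈ Ioo 0 L := ⟨by linarith, by linarith⟩
  obtain ⟨C, hC, hCb⟩ : ∃ C : ℝ, 0 < C ∧
      -C ≤ (deriv h (L/2) - (lam + M / (L/2))) / √(h (L/2)) :=
    ⟨|(deriv h (L/2) - (lam + M / (L/2))) / √(h (L/2))| + 1, by positivity, by
      linarith [neg_abs_le ((deriv h (L/2) - (lam + M / (L/2))) / √(h (L/2)))]⟩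
  have hder : ∀ r ∈ Ico (L/2) L, α - C * √(h r) ≤ deriv h r := by
    intro r hr
    have hr' : r ∈ Ioo 0 L := ⟨by linarith [hr.1], hr.2⟩
    have h1 := hCb.trans (hmono hmid hr' hr.1)
    have hs : 0 < √(h r) := Real.sqrt_pos.2 (hpos r hr')
    simp only at h1
    rw [le_div_iff₀ hs] at h1
    have h2 : M / L ≤ M / r := div_le_div_of_nonneg_left (by linarith) hr'.1 hr.2.le
    linarith
  refine ⟨min (h (L/2)) ((α / (2 * C)) ^ 2), lt_min (hpos _ hmid) (by positivity), ?_⟩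
  set c := min (h (L/2)) ((α / (2 * C)) ^ 2) with hc
  intro r hr
  have hin : ∀ x ∈ Icc (L/2) r, x ∈ Ioo 0 L := fun x hx =>
    ⟨by linarith [hx.1], by linarith [hx.2, hr.2]⟩
  have key := image_le_of_deriv_right_lt_deriv_boundary' (f := fun x => - h x)
    (f' := fun x => - deriv h x) (a := L/2) (b := r) (B := fun _ => -c) (B' := fun _ => 0)
    (fun x hx => (hd1 x (hin x hx)).neg.continuousAt.continuousWithinAt)
    (fun x hx => (hd1 x (hin x ⟨hx.1, hx.2.le⟩)).neg.hasDerivWithinAt)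
    (neg_le_neg (min_le_left _ _)) continuousOn_const
    (fun x _ => hasDerivWithinAt_const _ _ _)
    (by
      intro x hx he
      have hxc : h x = c := by simpa using he
      have h1 := hder x ⟨hx.1, hx.2.trans hr.2⟩
      have h2 : √(h x) ≤ α / (2 * C) := by
        rw [hxc]
        exact (Real.sqrt_le_left (by positivity)).2 (min_le_right _ _)
      have h3 : C * √(h x) ≤ α / 2 := by
        calc C * √(h x) ≤ C * (α / (2 * C)) := by gcongr
          _ = α / 2 := by field_simp
      linarith)
    (show r ∈ Icc (L/2) r from ⟨hr.1, le_rfl⟩)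
  simpa using key
end

section
/- Let λ ∈ ℝ and let n ≥ 2 be an integer. Suppose h ∈ C²((0,L)) satisfies 2r²h(r)h''(r) = (n-1)h(r)(h(r)-1) + r h'(r)(r h'(r) - λr - (n-1)) with h(r) > 0 on (0,L), where L ∈ (0,∞) is a constant with L < -(n-1)/λ in case λ < 0. Then there exists a constant c₂ > 0 such that h(r) ≤ c₂ for all r ∈ [L/2, L). -/
open Set Filter Topology

theorem uniform_upper_bound (lam : ℝ) (n : ℕ) (hn2 : 2 ≤ n) (L : ℝ) (hL : 0 < L)
    (hLlam : lam < 0 → L < -((n : ℝ) - 1) / lam) (h : ℝ → ℝ)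
    (hreg : ContDiffOn ℝ 2 h (Set.Ioo 0 L))
    (hode : ∀ r ∈ Set.Ioo (0 : ℝ) L,
      2 * r ^ 2 * h r * deriv (deriv h) r =
        ((n : ℝ) - 1) * h r * (h r - 1) +
          r * deriv h r * (r * deriv h r - lam * r - ((n : ℝ) - 1)))
    (hpos : ∀ r ∈ Set.Ioo (0 : ℝ) L, 0 < h r) :
    ∃ c₂ : ℝ, 0 < c₂ ∧ ∀ r ∈ Set.Ico (L / 2) L, h r ≤ c₂ := by
  have hm : (1 : ℝ) ≤ (n : ℝ) - 1 := by
    have : (2 : ℝ) ≤ n := by exact_mod_cast hn2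
    linarith
  generalize (n : ℝ) - 1 = m at *
  have hd1 : ∀ r ∈ Ioo (0 : ℝ) L, HasDerivAt h (deriv h r) r := fun r hr =>
    (((hreg.contDiffAt (isOpen_Ioo.mem_nhds hr)).differentiableAt (by norm_num))).hasDerivAt
  have hd2 : ∀ r ∈ Ioo (0 : ℝ) L, HasDerivAt (deriv h) (deriv (deriv h) r) r := fun r hr => by
    have := (hreg.deriv_of_isOpen (m := 1) isOpen_Ioo (by norm_num))
    exact ((this.contDiffAt (isOpen_Ioo.mem_nhds hr)).differentiableAt (by norm_num)).hasDerivAt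
  have hlam : ∀ r ∈ Ioo (0 : ℝ) L, 0 < lam * r + m := by
    intro r hr
    rcases lt_or_ge lam 0 with hl | hl
    · have h1 := hLlam hl
      rw [lt_div_iff_of_neg hl] at h1
      nlinarith [hr.1, hr.2]
    · have := mul_nonneg hl hr.1.le
      linarith
  have hhalf : L / 2 ∈ Ioo (0 : ℝ) L := ⟨by linarith, by linarith⟩
  obtain ⟨a, ha⟩ : ∃ a, a = 2 * m / L ^ 2 := ⟨_, rfl⟩
  have ha0 : 0 < a := by rw [ha]; positivity
  have haL : a * L ^ 2 = 2 * m := by rw [ha]; field_simp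
  obtain ⟨G, hG⟩ : ∃ G, G = |deriv h (L / 2) / h (L / 2)| + (a + 2) := ⟨_, rfl⟩
  have hGa : a + 2 ≤ G := by rw [hG]; linarith [abs_nonneg (deriv h (L / 2) / h (L / 2))]
  have hG0 : 0 < G := by linarith
  have hsub : ∀ r ∈ Ico (L / 2) L, r ∈ Ioo (0 : ℝ) L := fun r hr => ⟨by linarith [hr.1], hr.2⟩
  have hg : ∀ x ∈ Ioo (0 : ℝ) L, HasDerivAt (fun r => deriv h r / h r)
      ((deriv (deriv h) x * h x - deriv h x * deriv h x) / h x ^ 2) x := fun x hx =>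
    (hd2 x hx).div (hd1 x hx) (hpos x hx).ne'
  have key : ∀ r ∈ Ico (L / 2) L, deriv h r / h r ≤ G := by
    intro r hr
    have hs : ∀ x ∈ Icc (L / 2) r, x ∈ Ioo (0 : ℝ) L := fun x hx =>
      hsub x ⟨hx.1, hx.2.trans_lt hr.2⟩
    refine image_le_of_deriv_right_lt_deriv_boundary (f := fun r => deriv h r / h r)
      (B := fun _ => G) (B' := fun _ => 0) (a := L / 2) (b := r)
      (fun x hx => (hg x (hs x hx)).continuousAt.continuousWithinAt)
      (fun x hx => (hg x (hs x (Ico_subset_Icc_self hx))).hasDerivWithinAt)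
      ?_ (fun x => hasDerivAt_const x G) ?_ ⟨hr.1, le_rfl⟩
    · show deriv h (L / 2) / h (L / 2) ≤ G
      rw [hG]; linarith [le_abs_self (deriv h (L / 2) / h (L / 2))]
    · intro x hx hxG
      have hx' := hs x (Ico_subset_Icc_self hx)
      have hp := hpos x hx'
      have hx0 := hx'.1
      have e1 : deriv h x = G * h x := by
        have : deriv h x / h x = G := hxG
        rw [div_eq_iff hp.ne'] at this; exact this
      have ho := hode x hx'
      have hl := hlam x hx'
      rw [e1] at ho ⊢
      apply div_neg_of_neg_of_pos _ (by positivity)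
      have ho2 : 2 * x ^ 2 * deriv (deriv h) x
          = m * (h x - 1) + x * G * (x * (G * h x) - lam * x - m) := by
        apply mul_left_cancel₀ hp.ne'
        linarith
      have hxL : L ^ 2 / 4 ≤ x ^ 2 := by nlinarith [hx.1]
      have hG2 : 4 * a ≤ G ^ 2 := by nlinarith [sq_nonneg (a - 2)]
      have hxG2 : m ≤ x ^ 2 * G ^ 2 := by
        have : L ^ 2 / 4 * (4 * a) ≤ x ^ 2 * G ^ 2 := by gcongr
        nlinarith
      have h3 : 0 < x * G * (lam * x + m) := by positivity
      have h4 : 0 ≤ h x * (x ^ 2 * G ^ 2 - m) := mul_nonneg hp.le (by linarith)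
      have h5 : 2 * x ^ 2 * (deriv (deriv h) x - G ^ 2 * h x) < 0 := by nlinarith
      have h6 : deriv (deriv h) x - G ^ 2 * h x < 0 := by
        by_contra hc
        have : 0 ≤ 2 * x ^ 2 * (deriv (deriv h) x - G ^ 2 * h x) :=
          mul_nonneg (by positivity) (not_lt.mp hc)
        linarith
      have := mul_neg_of_neg_of_pos h6 hp
      linarith
  have hF : ∀ x ∈ Ioo (0 : ℝ) L, HasDerivAt (fun r => h r * Real.exp (-G * r))
      (deriv h x * Real.exp (-G * x) + h x * (Real.exp (-G * x) * (-G * 1))) x := fun x hx =>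
    (hd1 x hx).mul (((hasDerivAt_id x).const_mul (-G)).exp)
  have hanti : AntitoneOn (fun r => h r * Real.exp (-G * r)) (Ico (L / 2) L) := by
    apply antitoneOn_of_deriv_nonpos (convex_Ico _ _)
    · exact fun x hx => (hF x (hsub x hx)).continuousAt.continuousWithinAt
    · exact fun x hx => (hF x (hsub x (interior_subset hx))).differentiableAt.differentiableWithinAt
    · intro x hx
      have hx' := interior_subset hx
      rw [(hF x (hsub x hx')).deriv]
      have := key x hx'
      rw [div_le_iff₀ (hpos x (hsub x hx'))] at this
      nlinarith [Real.exp_pos (-G * x)]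
  refine ⟨h (L / 2) * Real.exp (-G * (L / 2)) * Real.exp (G * L), ?_, ?_⟩
  · have := hpos _ hhalf
    positivity
  · intro r hr
    have h1 : h r * Real.exp (-G * r) ≤ h (L / 2) * Real.exp (-G * (L / 2)) :=
      hanti ⟨le_rfl, hhalf.2⟩ hr hr.1
    have hp := hpos r (hsub r hr)
    calc h r = h r * Real.exp (-G * r) * Real.exp (G * r) := by
          rw [mul_assoc, ← Real.exp_add]; simp
      _ ≤ h r * Real.exp (-G * r) * Real.exp (G * L) := by
          gcongr
          exact hr.2.le
      _ ≤ _ := by gcongr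
end

section
/- Let λ ∈ ℝ and let n ≥ 2 be an integer. Suppose h ∈ C²((0,L)) satisfies 2r²h(r)h''(r) = (n-1)h(r)(h(r)-1) + r h'(r)(r h'(r) - λr - (n-1)) with h(r) > 0 on (0,L), where L ∈ (0,∞) is a constant with L < -(n-1)/λ in case λ < 0. Then there exist constants c₃ > 0 and c₄ ∈ ℝ such that c₄ ≤ h'(r) ≤ c₃ for all r ∈ [L/2, L). -/
open Set Filter Topology

theorem last_zero_aux (f : ℝ → ℝ) (a b : ℝ) (hab : a ≤ b) (hf : ContinuousOn f (Set.Icc a b))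
    (hb : 0 < f b) :
    ∃ s ∈ Set.Icc a b, (s = a ∨ f s = 0) ∧ ∀ x ∈ Set.Ioc s b, 0 < f x := by
  by_cases hne : (Set.Icc a b ∩ f ⁻¹' Set.Iic 0).Nonempty
  · have hcl : IsClosed (Set.Icc a b ∩ f ⁻¹' Set.Iic 0) :=
      hf.preimage_isClosed_of_isClosed isClosed_Icc isClosed_Iic
    have hcp : IsCompact (Set.Icc a b ∩ f ⁻¹' Set.Iic 0) :=
      isCompact_Icc.of_isClosed_subset hcl Set.inter_subset_left
    obtain ⟨s, ⟨hs, hs0⟩, hmax⟩ := hcp.exists_isGreatest hne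
    have hs0' : f s ≤ 0 := hs0
    have hpos : ∀ x ∈ Set.Ioc s b, 0 < f x := by
      intro x hx
      by_contra hcon
      have := hmax ⟨⟨hs.1.trans hx.1.le, hx.2⟩, not_lt.mp hcon⟩
      exact absurd this (not_le.mpr hx.1)
    refine ⟨s, hs, Or.inr ?_, hpos⟩
    obtain ⟨y, hy, hy0⟩ := intermediate_value_Icc hs.2
      (hf.mono (Set.Icc_subset_Icc_left hs.1)) (show (0:ℝ) ∈ Set.Icc (f s) (f b) from ⟨hs0', hb.le⟩)
    rcases hy.1.eq_or_lt with h1 | h1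
    · rw [h1]; exact hy0
    · have := hpos y ⟨h1, hy.2⟩
      linarith
  · refine ⟨a, ⟨le_refl _, hab⟩, Or.inl rfl, ?_⟩
    intro x hx
    by_contra hcon
    exact hne ⟨x, ⟨hx.1.le, hx.2⟩, not_lt.mp hcon⟩

theorem derivative_bounds (lam : ℝ) (n : ℕ) (hn2 : 2 ≤ n) (L : ℝ) (hL : 0 < L)
    (hLlam : lam < 0 → L < -((n : ℝ) - 1) / lam) (h : ℝ → ℝ)
    (hreg : ContDiffOn ℝ 2 h (Set.Ioo 0 L))
    (hode : ∀ r ∈ Set.Ioo (0 : ℝ) L,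
      2 * r ^ 2 * h r * deriv (deriv h) r =
        ((n : ℝ) - 1) * h r * (h r - 1) +
          r * deriv h r * (r * deriv h r - lam * r - ((n : ℝ) - 1)))
    (hpos : ∀ r ∈ Set.Ioo (0 : ℝ) L, 0 < h r) :
    ∃ c₃ : ℝ, 0 < c₃ ∧ ∃ c₄ : ℝ, ∀ r ∈ Set.Ico (L / 2) L, c₄ ≤ deriv h r ∧ deriv h r ≤ c₃ := by
  have hm : (0:ℝ) < (n:ℝ) - 1 := by
    have : (2:ℝ) ≤ n := by exact_mod_cast hn2
    linarith
  generalize (n:ℝ) - 1 = m at *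
  have hq : ∀ x ∈ Set.Ioo (0:ℝ) L, 0 < lam * x + m := by
    intro x hx
    rcases le_or_gt 0 lam with h0 | h0
    · have := mul_nonneg h0 hx.1.le
      linarith
    · have h1 := hLlam h0
      rw [lt_div_iff_of_neg h0] at h1
      nlinarith [hx.2]
  have hd1 : ∀ x ∈ Set.Ioo (0:ℝ) L, HasDerivAt h (deriv h x) x := by
    intro x hx
    exact ((hreg.differentiableOn (by norm_num)).differentiableAt
      (isOpen_Ioo.mem_nhds hx)).hasDerivAt
  have hd2 : ∀ x ∈ Set.Ioo (0:ℝ) L, HasDerivAt (deriv h) (deriv (deriv h) x) x := by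
    intro x hx
    have h1 : ContDiffOn ℝ 1 (deriv h) (Set.Ioo 0 L) :=
      hreg.deriv_of_isOpen isOpen_Ioo (by norm_num)
    exact ((h1.differentiableOn (by norm_num)).differentiableAt
      (isOpen_Ioo.mem_nhds hx)).hasDerivAt
  generalize deriv (deriv h) = p' at *
  generalize deriv h = p at *
  obtain ⟨C, hC⟩ : ∃ C, C = 4 * m / L ^ 2 := ⟨_, rfl⟩
  have hC0 : 0 < C := by rw [hC]; positivity
  have hCL : C * L ^ 2 = 4 * m := by rw [hC]; field_simp
  have hCr : ∀ x, L / 2 ≤ x → m ≤ C * x ^ 2 := by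
    intro x hx
    have : (L/2)^2 ≤ x^2 := by gcongr
    nlinarith
  have hlow : ∀ x ∈ Set.Ico (L/2) L, p x ≤ 0 → -C ≤ p' x := by
    intro x hx hp
    have hx0 : 0 < x := by linarith [hx.1]
    have hxm : x ∈ Set.Ioo 0 L := ⟨hx0, hx.2⟩
    have e := hode x hxm
    have hh := hpos x hxm
    have hqx := hq x hxm
    have k := hCr x hx.1
    have t1 : 0 ≤ x * p x * (x * p x - lam * x - m) := by
      have a1 : x * p x ≤ 0 := mul_nonpos_of_nonneg_of_nonpos hx0.le hp
      exact mul_nonneg_of_nonpos_of_nonpos a1 (by linarith)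
    have t2 : 0 ≤ h x * (2 * x^2 * p' x + m) := by nlinarith [mul_pos hm (mul_pos hh hh)]
    have t3 : 0 ≤ 2 * x^2 * p' x + m := nonneg_of_mul_nonneg_right t2 hh
    have t4 : 0 ≤ x^2 * (2 * p' x + C) := by nlinarith
    have t5 : 0 ≤ 2 * p' x + C := nonneg_of_mul_nonneg_right t4 (by positivity)
    linarith
  have hup : ∀ x ∈ Set.Ico (L/2) L, 0 ≤ p x → 2 * h x * p' x - p x ^ 2 ≤ C * h x ^ 2 := by
    intro x hx hp
    have hx0 : 0 < x := by linarith [hx.1]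
    have hxm : x ∈ Set.Ioo 0 L := ⟨hx0, hx.2⟩
    have e := hode x hxm
    have hh := hpos x hxm
    have hqx := hq x hxm
    have k := hCr x hx.1
    have t1 : 0 ≤ x * p x * (lam * x + m) := by positivity
    have t2 : 0 ≤ (C * x^2 - m) * h x ^ 2 := mul_nonneg (by linarith) (by positivity)
    have t4 : 0 ≤ x^2 * (C * h x ^ 2 - (2 * h x * p' x - p x ^ 2)) := by
      nlinarith [mul_pos hm hh]
    have t5 := nonneg_of_mul_nonneg_right t4 (by positivity)
    linarith
  have hsub : ∀ s r x, L/2 ≤ s → r < L → x ∈ Set.Icc s r → x ∈ Set.Ioo 0 L := by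
    intro s r x h1 h2 hx
    exact ⟨by linarith [hx.1], by linarith [hx.2]⟩
  obtain ⟨K, hK⟩ : ∃ K, K = p (L/2) ^ 2 / h (L/2) := ⟨_, rfl⟩
  have hK0 : 0 ≤ K := by
    have := hpos (L/2) ⟨by linarith, by linarith⟩
    rw [hK]; positivity
  have hquad : ∀ r ∈ Set.Ico (L/2) L, 0 < p r → p r ^ 2 ≤ (C * h r + K) * h r := by
    intro r hr hp
    obtain ⟨s, hs, hs1, hs2⟩ := last_zero_aux p (L/2) r hr.1
      (fun x hx => (hd2 x (hsub _ _ x le_rfl hr.2 hx)).continuousAt.continuousWithinAt) hp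
    have hD : ∀ x ∈ Set.Icc s r, HasDerivAt (fun y => p y ^ 2 / h y - C * h y)
        ((2 * p x * p' x * h x - p x ^ 2 * p x) / h x ^ 2 - C * p x) x := by
      intro x hx
      have hxm := hsub _ _ x hs.1 hr.2 hx
      have := (((hd2 x hxm).pow 2).div (hd1 x hxm) (hpos x hxm).ne').sub ((hd1 x hxm).const_mul C)
      refine HasDerivAt.congr_deriv this ?_
      simp
    have hanti : AntitoneOn (fun y => p y ^ 2 / h y - C * h y) (Set.Icc s r) := by
      apply antitoneOn_of_deriv_nonpos (convex_Icc s r)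
      · exact fun x hx => (hD x hx).continuousAt.continuousWithinAt
      · exact fun x hx => (hD x (interior_subset hx)).differentiableAt.differentiableWithinAt
      · intro x hx
        rw [(hD x (interior_subset hx)).deriv]
        rw [interior_Icc] at hx
        have hpx := hs2 x ⟨hx.1, hx.2.le⟩
        have u := hup x ⟨hs.1.trans hx.1.le, hx.2.trans hr.2⟩ hpx.le
        have hh := hpos x (hsub _ _ x hs.1 hr.2 ⟨hx.1.le, hx.2.le⟩)
        rw [sub_nonpos, div_le_iff₀ (by positivity)]
        nlinarith
    have key := hanti ⟨le_rfl, hs.2⟩ ⟨hs.2, le_rfl⟩ hs.2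
    simp only at key
    have hhs := hpos s (hsub _ _ s hs.1 hr.2 ⟨le_rfl, hs.2⟩)
    have hhr := hpos r (hsub _ _ r hs.1 hr.2 ⟨hs.2, le_rfl⟩)
    have hws : p s ^ 2 / h s ≤ K := by
      rcases hs1 with h1 | h1
      · rw [h1, hK]
      · rw [h1]; simpa using hK0
    have : 0 < C * h s := by positivity
    rw [← div_le_iff₀ hhr]
    linarith
  obtain ⟨A, hA⟩ : ∃ A, A = C + K + 1 := ⟨_, rfl⟩
  have hA1 : 1 ≤ A := by linarith
  have hlin : ∀ r ∈ Set.Ico (L/2) L, p r ≤ A * (h r + 1) := by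
    intro r hr
    have hh := hpos r ⟨by linarith [hr.1], hr.2⟩
    rcases le_or_gt (p r) 0 with h0 | h0
    · have : 0 ≤ A * (h r + 1) := by positivity
      linarith
    · have q1 := hquad r hr h0
      apply le_of_sq_le_sq _ (by positivity)
      have e1 : (C * h r + K) * h r ≤ A * (h r + 1)^2 := by
        rw [hA]
        nlinarith [mul_pos hC0 hh, mul_nonneg hK0 hh.le, mul_nonneg hK0 (sq_nonneg (h r)), sq_nonneg (h r + 1)]
      have e2 : A * (h r + 1)^2 ≤ (A * (h r + 1))^2 := by
        rw [mul_pow]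
        gcongr
        nlinarith
      linarith
  have hanti2 : AntitoneOn (fun y => (h y + 1) * Real.exp (-(A * y))) (Set.Ico (L/2) L) := by
    have hD : ∀ x ∈ Set.Ico (L/2) L, HasDerivAt (fun y => (h y + 1) * Real.exp (-(A * y)))
        ((p x - A * (h x + 1)) * Real.exp (-(A * x))) x := by
      intro x hx
      have hxm : x ∈ Set.Ioo 0 L := ⟨by linarith [hx.1], hx.2⟩
      have := ((hd1 x hxm).add_const 1).mul (((hasDerivAt_id x).const_mul A).neg.exp)
      refine HasDerivAt.congr_deriv this ?_
      simp
      ring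
    apply antitoneOn_of_deriv_nonpos (convex_Ico _ _)
    · exact fun x hx => (hD x hx).continuousAt.continuousWithinAt
    · exact fun x hx => (hD x (interior_subset hx)).differentiableAt.differentiableWithinAt
    · intro x hx
      rw [(hD x (interior_subset hx)).deriv]
      have := hlin x (interior_subset hx)
      exact mul_nonpos_of_nonpos_of_nonneg (by linarith) (Real.exp_pos _).le
  have ha : L/2 ∈ Set.Ico (L/2) L := ⟨le_rfl, by linarith⟩
  have hha := hpos (L/2) ⟨by linarith, by linarith⟩
  refine ⟨A * ((h (L/2) + 1) * Real.exp (-(A * (L/2))) * Real.exp (A * L)), by positivity,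
    min (p (L/2)) 0 - C * L, ?_⟩
  intro r hr
  constructor
  · rcases le_or_gt 0 (p r) with h0 | h0
    · have : 0 < C * L := by positivity
      linarith [min_le_right (p (L/2)) 0]
    · obtain ⟨s, hs, hs1, hs2⟩ := last_zero_aux (fun x => - p x) (L/2) r hr.1
        (fun x hx => (hd2 x (hsub _ _ x le_rfl hr.2 hx)).continuousAt.neg.continuousWithinAt)
        (by simpa using h0)
      have hD : ∀ x ∈ Set.Icc s r, HasDerivAt (fun y => p y + C * y) (p' x + C) x := by
        intro x hx
        have := (hd2 x (hsub _ _ x hs.1 hr.2 hx)).add ((hasDerivAt_id x).const_mul C)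
        refine HasDerivAt.congr_deriv this ?_
        simp
      have hmono : MonotoneOn (fun y => p y + C * y) (Set.Icc s r) := by
        apply monotoneOn_of_deriv_nonneg (convex_Icc s r)
        · exact fun x hx => (hD x hx).continuousAt.continuousWithinAt
        · exact fun x hx => (hD x (interior_subset hx)).differentiableAt.differentiableWithinAt
        · intro x hx
          rw [(hD x (interior_subset hx)).deriv]
          rw [interior_Icc] at hx
          have hpx := hs2 x ⟨hx.1, hx.2.le⟩
          have := hlow x ⟨hs.1.trans hx.1.le, hx.2.trans hr.2⟩ (by linarith)
          linarith
      have key := hmono ⟨le_rfl, hs.2⟩ ⟨hs.2, le_rfl⟩ hs.2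
      simp only at key
      have hps : min (p (L/2)) 0 ≤ p s := by
        rcases hs1 with h1 | h1
        · rw [h1]; exact min_le_left _ _
        · have : p s = 0 := by linarith
          rw [this]; exact min_le_right _ _
      have c1 : C * r ≤ C * L := by gcongr; exact hr.2.le
      have c2 : 0 ≤ C * s := mul_nonneg hC0.le (by linarith [hs.1])
      linarith
  · refine (hlin r hr).trans ?_
    have key := hanti2 ha hr hr.1
    simp only at key
    have hhr := hpos r ⟨by linarith [hr.1], hr.2⟩
    have e1 : h r + 1 = (h r + 1) * Real.exp (-(A * r)) * Real.exp (A * r) := by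
      rw [mul_assoc, ← Real.exp_add]; simp
    have e2 : Real.exp (A * r) ≤ Real.exp (A * L) := by
      apply Real.exp_le_exp.mpr
      gcongr
      exact hr.2.le
    apply mul_le_mul_of_nonneg_left _ (by linarith)
    rw [e1]
    gcongr
end

section
/- Let λ, μ₁ ∈ ℝ and let n ≥ 2 be an integer. Then there exists a constant ε > 0 such that the equation 2r²h(r)h''(r) = (n-1)h(r)(h(r)-1) + r h'(r)(r h'(r) - λr - (n-1)), h(r) > 0, has a unique solution h which is real-analytic on [0,ε) and satisfies h(0) = 1 and h'(0) = μ₁. -/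
open Set Filter Topology

/-- `h` is a real-analytic solution on `[0,ε)` of
`2r²h h'' = (n-1)h(h-1) + r h'(r h' - λr - (n-1))`, `h > 0` on `(0,ε)`,
with `h(0) = 1` and `h'(0) = μ₁`. -/
def IsAnalyticSolOn (n : ℕ) (lam μ₁ ε : ℝ) (h : ℝ → ℝ) : Prop :=
  AnalyticOn ℝ h (Set.Ico 0 ε) ∧
  (∀ r ∈ Set.Ioo (0 : ℝ) ε,
    2 * r ^ 2 * h r * deriv (deriv h) r =
      ((n : ℝ) - 1) * h r * (h r - 1) +
        r * deriv h r * (r * deriv h r - lam * r - ((n : ℝ) - 1)) ∧ 0 < h r) ∧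
  h 0 = 1 ∧ derivWithin h (Set.Ici 0) 0 = μ₁

namespace AnSol

/-- absolute convergence inside radius `x` -/
def Conv (c : ℕ → ℝ) (x : ℝ) : Prop :=
  ∀ ρ : ℝ, 0 ≤ ρ → ρ < x → Summable (fun k => |c k| * ρ ^ k)

noncomputable def F (c : ℕ → ℝ) (r : ℝ) : ℝ := ∑' k, c k * r ^ k

/-- Euler operator -/
noncomputable def th (c : ℕ → ℝ) (k : ℕ) : ℝ := k * c k

lemma Conv.norm_sum {c : ℕ → ℝ} {x r : ℝ} (h : Conv c x) (hr : |r| < x) :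
    Summable (fun k => ‖c k * r ^ k‖) := by
  simpa [abs_mul, abs_pow] using h |r| (abs_nonneg r) hr

lemma Conv.hasSum {c : ℕ → ℝ} {x r : ℝ} (h : Conv c x) (hr : |r| < x) :
    HasSum (fun k => c k * r ^ k) (F c r) :=
  (h.norm_sum hr).of_norm.hasSum

lemma Conv.theta {c : ℕ → ℝ} {x : ℝ} (h : Conv c x) : Conv (th c) x := by
  intro ρ h0 hx
  obtain ⟨σ, h1, h2⟩ := exists_between hx
  have hσ : 0 < σ := lt_of_le_of_lt h0 h1
  have hs := h σ hσ.le h2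
  have hq : ‖ρ / σ‖ < 1 := by
    rw [Real.norm_eq_abs, abs_of_nonneg (by positivity), div_lt_one hσ]; exact h1
  have ht : Tendsto (fun k : ℕ => (k : ℝ) ^ 1 * (ρ / σ) ^ k) atTop (𝓝 0) := (summable_pow_mul_geometric_of_norm_lt_one 1 hq).tendsto_atTop_zero
  obtain ⟨C, hC⟩ := ht.bddAbove_range
  have hC' : ∀ k : ℕ, (k : ℝ) * (ρ / σ) ^ k ≤ C := fun k => by
    have := hC (mem_range_self k)
    simpa only [pow_one] using this
  refine Summable.of_nonneg_of_le (fun k => mul_nonneg (abs_nonneg _) (pow_nonneg h0 _)) (fun k => ?_) (hs.mul_left C)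
  have e : |th c k| * ρ ^ k = ((k : ℝ) * (ρ / σ) ^ k) * (|c k| * σ ^ k) := by
    simp only [AnSol.th, abs_mul, Nat.abs_cast]
    rw [div_pow]; field_simp
  rw [e]
  exact mul_le_mul_of_nonneg_right (hC' k) (by positivity)

lemma Conv.hasDeriv {c : ℕ → ℝ} {x r : ℝ} (h : Conv c x) (hr : |r| < x) :
    ∃ d, HasDerivAt (F c) d r ∧ r * d = F (th c) r := by
  obtain ⟨ρ, h1, h2⟩ := exists_between hr
  have hρ : 0 < ρ := lt_of_le_of_lt (abs_nonneg r) h1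
  have hs := (h.theta ρ hρ.le h2).mul_right ρ⁻¹
  refine ⟨∑' k, c k * (k * r ^ (k - 1)), ?_, ?_⟩
  · refine hasDerivAt_tsum_of_isPreconnected (t := Metric.ball (0:ℝ) ρ) (y₀ := 0)
      (g' := fun k y => c k * (k * y ^ (k - 1))) hs
      Metric.isOpen_ball (convex_ball _ _).isPreconnected ?_ ?_ (Metric.mem_ball_self hρ) ?_ ?_
    · intro k y _
      exact (hasDerivAt_pow k y).const_mul _
    · intro k y hy
      have hy' : |y| < ρ := by simpa using hy
      rcases k with _ | k
      · simp [AnSol.th]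
      · simp only [AnSol.th, Nat.add_sub_cancel, norm_mul, Real.norm_eq_abs, abs_mul, abs_pow,
          Nat.abs_cast]
        have e : (((k + 1 : ℕ) : ℝ) * |c (k + 1)|) * ρ ^ (k + 1) * ρ⁻¹
            = |c (k + 1)| * (((k + 1 : ℕ) : ℝ) * ρ ^ k) := by
          rw [pow_succ]; field_simp
        rw [e]
        gcongr
    · exact (h.norm_sum (r := 0) (by simpa using hρ.trans h2)).of_norm
    · simpa using h1
  · rw [← tsum_mul_left, F]
    refine tsum_congr fun k => ?_
    rcases k with _ | k
    · simp [AnSol.th]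
    · simp only [AnSol.th, Nat.add_sub_cancel]; ring

lemma Conv.fps {c : ℕ → ℝ} {x ρ : ℝ} (h : Conv c x) (h0 : 0 < ρ) (hρ : ρ < x) :
    HasFPowerSeriesOnBall (F c) (FormalMultilinearSeries.ofScalars ℝ c) 0 (ENNReal.ofReal ρ) where
  r_le := by
    have : ENNReal.ofReal ρ = ((ρ.toNNReal : NNReal) : ENNReal) := rfl
    rw [this]
    apply FormalMultilinearSeries.le_radius_of_summable
    simpa [FormalMultilinearSeries.ofScalars_norm, h0.le] using h ρ h0.le hρ
  r_pos := by simpa using h0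
  hasSum := by
    intro y hy
    have hy' : |y| < ρ := by
      rw [Metric.eball_ofReal] at hy
      simpa using hy
    simpa [FormalMultilinearSeries.ofScalars_apply_eq, mul_comm] using h.hasSum (hy'.trans hρ)

lemma Conv.analyticAt {c : ℕ → ℝ} {x r : ℝ} (h : Conv c x) (hr : |r| < x) :
    AnalyticAt ℝ (F c) r := by
  obtain ⟨ρ, h1, h2⟩ := exists_between hr
  have hρ : 0 < ρ := lt_of_le_of_lt (abs_nonneg r) h1
  refine (h.fps hρ h2).analyticAt_of_mem ?_
  rw [Metric.eball_ofReal]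
  simpa using h1

lemma Conv.eq_zero {c : ℕ → ℝ} {x : ℝ} (hx : 0 < x) (h : Conv c x)
    (hz : ∀ r, 0 < r → r < x → F c r = 0) : ∀ k, c k = 0 := by
  have ha : AnalyticAt ℝ (F c) 0 := h.analyticAt (by simpa using hx)
  have hfr : ∃ᶠ z in 𝓝[≠] (0:ℝ), F c z = 0 := by
    have : ∃ᶠ z in 𝓝[>] (0:ℝ), F c z = 0 := by
      apply Eventually.frequently
      filter_upwards [Ioo_mem_nhdsGT hx] with r hr using hz r hr.1 hr.2
    exact this.filter_mono (nhdsWithin_mono _ (fun y hy => ne_of_gt hy))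
  have hev := ha.frequently_zero_iff_eventually_zero.1 hfr
  have h1 : HasFPowerSeriesAt (F c) (FormalMultilinearSeries.ofScalars ℝ c) 0 :=
    ⟨_, h.fps (half_pos hx) (half_lt_self hx)⟩
  have h2 := h1.eq_zero_of_eventually hev
  rw [FormalMultilinearSeries.ofScalars_series_eq_zero] at h2
  exact fun k => congrFun h2 k

lemma cauchy {c d : ℕ → ℝ} {x r : ℝ} (hc : Conv c x) (hd : Conv d x) (hr : |r| < x) :
    HasSum (fun k => (∑ p ∈ Finset.HasAntidiagonal.antidiagonal k, c p.1 * d p.2) * r ^ k) (F c r * F d r) := by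
  have h1 := hc.norm_sum hr
  have h2 := hd.norm_sum hr
  have h3 := (summable_norm_sum_mul_antidiagonal_of_summable_norm h1 h2).of_norm.hasSum
  rw [← tsum_mul_tsum_eq_tsum_sum_antidiagonal_of_summable_norm h1 h2] at h3
  have e : (fun k => (∑ p ∈ Finset.HasAntidiagonal.antidiagonal k, c p.1 * d p.2) * r ^ k) =
      fun k => ∑ p ∈ Finset.HasAntidiagonal.antidiagonal k, (c p.1 * r ^ p.1) * (d p.2 * r ^ p.2) := by
    funext k
    rw [Finset.sum_mul]
    refine Finset.sum_congr rfl fun p hp => ?_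
    rw [← Finset.HasAntidiagonal.mem_antidiagonal.1 hp, pow_add]; ring
  rw [e]
  exact h3

lemma hs_congr {f g : ℕ → ℝ} {a b : ℝ} (h : HasSum f a) (e : ∀ k, g k = f k) (e' : b = a) :
    HasSum g b := by
  have : g = f := funext e
  rw [this, e']; exact h

/-- kernel of the quadratic term -/
noncomputable def ker (m : ℝ) (p : ℕ × ℕ) : ℝ := m + p.1 * p.2 - 2 * (p.2 * (p.2 - 1))

noncomputable def sh (c : ℕ → ℝ) : ℕ → ℝ
  | 0 => 0
  | k + 1 => th c k

/-- coefficients of the residual -/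
noncomputable def ee (m lam : ℝ) (c : ℕ → ℝ) (k : ℕ) : ℝ :=
  (2 * k + m) * (k - 1) * c k + lam * sh c k
    - ∑ p ∈ Finset.HasAntidiagonal.antidiagonal k, ker m p * (c p.1 * c p.2)

lemma res_hasSum (m lam : ℝ) {c : ℕ → ℝ} {x r : ℝ} (h : Conv c x) (hr : |r| < x) :
    HasSum (fun k => ee m lam c k * r ^ k)
      (2 * (1 + F c r) * (F (th (th c)) r - F (th c) r) - m * (1 + F c r) * F c r
        - F (th c) r * (F (th c) r - lam * r - m)) := by
  have hA := h.hasSum hr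
  have hB := h.theta.hasSum hr
  have hC := h.theta.theta.hasSum hr
  have hAA := cauchy h h hr
  have hBB := cauchy h.theta h.theta hr
  have hAB := cauchy h h.theta hr
  have hAC := cauchy h h.theta.theta hr
  have hS : HasSum (fun k => sh c k * r ^ k) (r * F (th c) r) := by
    rw [← hasSum_nat_add_iff' 1]
    have := hB.mul_left r
    simp only [Finset.range_one, Finset.sum_singleton, sh, zero_mul, sub_zero]
    exact hs_congr this (fun k => by rw [pow_succ]; ring) rfl
  have := (((((hC.mul_left 2).sub (hB.mul_left 2)).sub (hA.mul_left m)).add (hB.mul_left m)).add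
    (hS.mul_left lam)).sub (((hAA.mul_left m).add hBB).sub ((hAC.sub hAB).mul_left 2))
  refine hs_congr this (fun k => ?_) ?_
  · have e : ∑ p ∈ Finset.HasAntidiagonal.antidiagonal k, ker m p * (c p.1 * c p.2) =
        m * (∑ p ∈ Finset.HasAntidiagonal.antidiagonal k, c p.1 * c p.2)
        + (∑ p ∈ Finset.HasAntidiagonal.antidiagonal k, th c p.1 * th c p.2)
        - 2 * ((∑ p ∈ Finset.HasAntidiagonal.antidiagonal k, c p.1 * th (th c) p.2)
          - (∑ p ∈ Finset.HasAntidiagonal.antidiagonal k, c p.1 * th c p.2)) := by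
      simp only [Finset.mul_sum, ← Finset.sum_sub_distrib, ← Finset.sum_add_distrib]
      refine Finset.sum_congr rfl fun p _ => ?_
      simp only [ker, th]; ring
    simp only [ee, e]
    simp only [th]
    ring
  · ring

lemma ee_succ (m lam : ℝ) {c : ℕ → ℝ} (h0 : c 0 = 0) (k : ℕ) :
    ee m lam c (k + 2) = (2 * (k + 2) + m) * (k + 1) * c (k + 2) + lam * ((k + 1) * c (k + 1))
      - ∑ p ∈ Finset.HasAntidiagonal.antidiagonal k,
          ker m (p.1 + 1, p.2 + 1) * (c (p.1 + 1) * c (p.2 + 1)) := by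
  simp only [ee, sh, th, Finset.Nat.antidiagonal_succ_succ', Finset.sum_cons, h0, Finset.sum_map]
  simp [Prod.map]
  left; left; ring

noncomputable def co (m lam μ : ℝ) : ℕ → ℝ
  | 0 => 0
  | 1 => μ
  | k + 2 => (∑ p ∈ (Finset.HasAntidiagonal.antidiagonal k).attach,
          ker m (p.1.1 + 1, p.1.2 + 1) * (co m lam μ (p.1.1 + 1) * co m lam μ (p.1.2 + 1))
          - lam * ((k + 1) * co m lam μ (k + 1))) / ((2 * (k + 2) + m) * (k + 1))
decreasing_by
  all_goals first
    | omega
    | (have := Finset.HasAntidiagonal.mem_antidiagonal.1 p.2; omega)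

lemma co_zero (m lam μ : ℝ) : co m lam μ 0 = 0 := by rw [co]
lemma co_one (m lam μ : ℝ) : co m lam μ 1 = μ := by rw [co]
lemma co_succ (m lam μ : ℝ) (k : ℕ) : co m lam μ (k + 2) =
    (∑ p ∈ Finset.HasAntidiagonal.antidiagonal k,
          ker m (p.1 + 1, p.2 + 1) * (co m lam μ (p.1 + 1) * co m lam μ (p.2 + 1))
          - lam * ((k + 1) * co m lam μ (k + 1))) / ((2 * (k + 2) + m) * (k + 1)) := by
  rw [co, Finset.sum_attach (Finset.HasAntidiagonal.antidiagonal k) (fun p =>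
    ker m (p.1 + 1, p.2 + 1) * (co m lam μ (p.1 + 1) * co m lam μ (p.2 + 1)))]

lemma ee_co {m : ℝ} (hm : 0 < m) (lam μ : ℝ) (k : ℕ) : ee m lam (co m lam μ) k = 0 := by
  rcases k with _ | _ | k
  · simp [ee, sh, co_zero]
  · simp [ee, sh, th, co_zero, Finset.Nat.antidiagonal_succ]
  · rw [ee_succ _ _ (co_zero m lam μ), co_succ]
    field_simp
    ring

lemma co_unique {m : ℝ} (hm : 0 < m) (lam μ : ℝ) {c : ℕ → ℝ} (h0 : c 0 = 0) (h1 : c 1 = μ)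
    (he : ∀ k, ee m lam c k = 0) (k : ℕ) : c k = co m lam μ k := by
  induction k using Nat.strong_induction_on with
  | _ k ih =>
    rcases k with _ | _ | k
    · rw [h0, co_zero]
    · rw [co_one]; exact h1
    · have := he (k + 2)
      rw [ee_succ _ _ h0] at this
      rw [co_succ, eq_div_iff (by positivity), ← ih (k + 1) (by omega)]
      have e : ∑ p ∈ Finset.HasAntidiagonal.antidiagonal k,
          ker m (p.1 + 1, p.2 + 1) * (c (p.1 + 1) * c (p.2 + 1)) =
          ∑ p ∈ Finset.HasAntidiagonal.antidiagonal k,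
          ker m (p.1 + 1, p.2 + 1) * (co m lam μ (p.1 + 1) * co m lam μ (p.2 + 1)) := by
        refine Finset.sum_congr rfl fun p hp => ?_
        have hp := Finset.HasAntidiagonal.mem_antidiagonal.1 hp
        rw [ih _ (by omega), ih _ (by omega)]
      rw [← e]
      linarith

lemma ker_bound {m : ℝ} (hm : 0 < m) {k : ℕ} {p : ℕ × ℕ}
    (hp : p ∈ Finset.HasAntidiagonal.antidiagonal k) :
    |ker m (p.1 + 1, p.2 + 1)| ≤ 4 * ((2 * (k + 2) + m) * (k + 1)) := by
  obtain ⟨i, j⟩ := p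
  have hp := Finset.HasAntidiagonal.mem_antidiagonal.1 hp
  simp only at hp
  have hk : (k : ℝ) = i + j := by exact_mod_cast hp.symm
  have hi : (0:ℝ) ≤ i := by positivity
  have hj : (0:ℝ) ≤ j := by positivity
  simp only [ker, hk]
  push_cast
  rw [abs_le]
  constructor <;> nlinarith [mul_nonneg hi hj, mul_nonneg hm.le hi, mul_nonneg hm.le hj, mul_nonneg hi hi, mul_nonneg hj hj]

lemma co_bound {m : ℝ} (hm : 0 < m) (lam μ : ℝ) (k : ℕ) :
    |co m lam μ (k + 2)| ≤ |lam| * |co m lam μ (k + 1)| +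
      4 * ∑ p ∈ Finset.HasAntidiagonal.antidiagonal k,
        |co m lam μ (p.1 + 1)| * |co m lam μ (p.2 + 1)| := by
  have hD : 0 < (2 * ((k:ℝ) + 2) + m) * (k + 1) := by positivity
  rw [co_succ, abs_div, abs_of_pos hD, div_le_iff₀ hD]
  refine (abs_sub _ _).trans ?_
  have h1 : |∑ p ∈ Finset.HasAntidiagonal.antidiagonal k,
          ker m (p.1 + 1, p.2 + 1) * (co m lam μ (p.1 + 1) * co m lam μ (p.2 + 1))| ≤
      ∑ p ∈ Finset.HasAntidiagonal.antidiagonal k, (4 * ((2 * ((k:ℝ) + 2) + m) * (k + 1))) *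
        (|co m lam μ (p.1 + 1)| * |co m lam μ (p.2 + 1)|) := by
    refine (Finset.abs_sum_le_sum_abs _ _).trans (Finset.sum_le_sum fun p hp => ?_)
    rw [abs_mul, abs_mul]
    exact mul_le_mul_of_nonneg_right (ker_bound hm hp) (by positivity)
  rw [← Finset.mul_sum] at h1
  have h2 : |lam * ((k + 1) * co m lam μ (k + 1))| ≤
      |lam| * |co m lam μ (k + 1)| * ((2 * ((k:ℝ) + 2) + m) * (k + 1)) := by
    rw [abs_mul, abs_mul, abs_of_nonneg (by positivity : (0:ℝ) ≤ (k:ℝ) + 1)]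
    have : (k:ℝ) + 1 ≤ (2 * ((k:ℝ) + 2) + m) * (k + 1) := by
      have hk : (0:ℝ) ≤ k := by positivity
      nlinarith [mul_nonneg hm.le hk]
    calc _ = |lam| * |co m lam μ (k + 1)| * ((k:ℝ) + 1) := by ring
      _ ≤ _ := mul_le_mul_of_nonneg_left this (by positivity)
  linarith

/-- abstract majorant argument -/
lemma majorant {w : ℕ → ℝ} (hw : ∀ k, 0 ≤ w k) (h0 : w 0 = 0) (h1 : w 1 ≤ 1 / 32)
    (h2 : ∀ k, w (k + 2) ≤ 1 / 4 * w (k + 1) +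
      4 * ∑ p ∈ Finset.HasAntidiagonal.antidiagonal k, w (p.1 + 1) * w (p.2 + 1)) (N : ℕ) :
    ∑ k ∈ Finset.range N, w (k + 1) ≤ 1 / 8 := by
  induction N with
  | zero => simp
  | succ N ih =>
    rw [Finset.sum_range_succ']
    have hT : 0 ≤ ∑ k ∈ Finset.range N, w (k + 1) := Finset.sum_nonneg fun _ _ => hw _
    have hq : ∑ k ∈ Finset.range N, ∑ p ∈ Finset.HasAntidiagonal.antidiagonal k,
        w (p.1 + 1) * w (p.2 + 1) ≤ (∑ k ∈ Finset.range N, w (k + 1)) ^ 2 := by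
      have e : ∀ k ∈ Finset.range N, ∑ p ∈ Finset.HasAntidiagonal.antidiagonal k,
          w (p.1 + 1) * w (p.2 + 1) =
          ∑ p ∈ (Finset.range N ×ˢ Finset.range N) with p.1 + p.2 = k,
            w (p.1 + 1) * w (p.2 + 1) := by
        intro k hk
        refine Finset.sum_congr ?_ fun _ _ => rfl
        ext p
        simp only [Finset.HasAntidiagonal.mem_antidiagonal, Finset.mem_filter, Finset.mem_product,
          Finset.mem_range] at hk ⊢
        omega
      rw [Finset.sum_congr rfl e, Finset.sum_fiberwise_eq_sum_filter, pow_two,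
        Finset.sum_mul_sum, ← Finset.sum_product']
      exact Finset.sum_le_sum_of_subset_of_nonneg (Finset.filter_subset _ _)
        fun p _ _ => mul_nonneg (hw _) (hw _)
    have hs : ∑ k ∈ Finset.range N, w (k + 1 + 1) ≤ 1 / 4 * ∑ k ∈ Finset.range N, w (k + 1) +
        4 * ∑ k ∈ Finset.range N, ∑ p ∈ Finset.HasAntidiagonal.antidiagonal k,
          w (p.1 + 1) * w (p.2 + 1) := by
      rw [Finset.mul_sum, Finset.mul_sum, ← Finset.sum_add_distrib]
      exact Finset.sum_le_sum fun k _ => h2 k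
    simp only [zero_add]
    nlinarith

lemma co_conv {m : ℝ} (hm : 0 < m) (lam μ : ℝ) :
    ∃ x, 0 < x ∧ Conv (co m lam μ) x ∧ ∀ r, |r| < x → |F (co m lam μ) r| ≤ 1 / 8 := by
  set x : ℝ := 1 / (4 * |lam| + 32 * |μ| + 1) with hx
  have hd : 0 < 4 * |lam| + 32 * |μ| + 1 := by positivity
  have hx0 : 0 < x := by positivity
  have hl : |lam| * x ≤ 1 / 4 := by
    rw [hx, mul_one_div, div_le_iff₀ hd]; linarith [abs_nonneg μ, abs_nonneg lam]
  have hmu : |μ| * x ≤ 1 / 32 := by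
    rw [hx, mul_one_div, div_le_iff₀ hd]; linarith [abs_nonneg μ, abs_nonneg lam]
  have hw : ∀ k, 0 ≤ |co m lam μ k| * x ^ k := fun k => by positivity
  have hM := majorant (w := fun k => |co m lam μ k| * x ^ k) hw (by simp [co_zero])
    (by simpa [co_one] using hmu) (fun k => by
      have := mul_le_mul_of_nonneg_right (co_bound hm lam μ k) (pow_nonneg hx0.le (k + 2))
      refine this.trans ?_
      rw [add_mul]
      refine add_le_add ?_ (le_of_eq ?_)
      · have h1 := mul_le_mul_of_nonneg_right hl (hw (k + 1))
        refine le_trans (le_of_eq ?_) h1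
        ring
      · rw [mul_assoc, Finset.sum_mul]
        congr 1
        refine Finset.sum_congr rfl fun p hp => ?_
        rw [← Finset.HasAntidiagonal.mem_antidiagonal.1 hp]
        ring)
  have hM' : ∀ N, ∑ k ∈ Finset.range N, |co m lam μ k| * x ^ k ≤ 1 / 8 := by
    intro N
    rcases N with _ | N
    · simp
    · rw [Finset.sum_range_succ']
      simpa [co_zero] using hM N
  have hsx := summable_of_sum_range_le hw hM'
  have hc : Conv (co m lam μ) x := by
    intro ρ h0 h1
    exact Summable.of_nonneg_of_le (fun k => by positivity) (fun k => by gcongr) hsx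
  refine ⟨x, hx0, hc, fun r hr => ?_⟩
  have h1 : |F (co m lam μ) r| ≤ ∑' k, ‖co m lam μ k * r ^ k‖ :=
    norm_tsum_le_tsum_norm (hc.norm_sum hr)
  refine h1.trans (Real.tsum_le_of_sum_range_le (fun _ => norm_nonneg _) fun N => ?_)
  refine le_trans (Finset.sum_le_sum fun k _ => ?_) (hM' N)
  rw [norm_mul, norm_pow, Real.norm_eq_abs, Real.norm_eq_abs]
  gcongr

/-- the two derivatives in terms of the Euler operator -/
lemma Conv.derivs {c : ℕ → ℝ} {x r : ℝ} (h : Conv c x) (h0 : 0 < r) (hr : r < x) :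
    r * deriv (fun y => 1 + F c y) r = F (th c) r ∧
    r ^ 2 * deriv (deriv (fun y => 1 + F c y)) r = F (th (th c)) r - F (th c) r := by
  have key : ∀ y ∈ Ioo 0 x, deriv (fun y => 1 + F c y) y = F (th c) y / y := by
    intro y hy
    obtain ⟨d, hd, he⟩ := h.hasDeriv (r := y) (by rw [abs_of_pos hy.1]; exact hy.2)
    rw [(hd.const_add 1).deriv, ← he]
    field_simp [hy.1.ne']
  have hrr : |r| < x := by rwa [abs_of_pos h0]
  refine ⟨by rw [key r ⟨h0, hr⟩]; field_simp, ?_⟩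
  have hev : deriv (fun y => 1 + F c y) =ᶠ[𝓝 r] fun y => F (th c) y / y := by
    filter_upwards [Ioo_mem_nhds h0 hr] with y hy using key y hy
  obtain ⟨d, hd, he⟩ := h.theta.hasDeriv hrr
  rw [hev.deriv_eq, (hd.fun_div (hasDerivAt_id' r) h0.ne').deriv, ← he]
  field_simp

lemma Conv.deriv_zero {c : ℕ → ℝ} {x : ℝ} (h : Conv c x) (hx : 0 < x) :
    HasDerivAt (F c) (c 1) 0 := by
  have h1 : HasFPowerSeriesAt (F c) (FormalMultilinearSeries.ofScalars ℝ c) 0 :=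
    ⟨_, h.fps (half_pos hx) (half_lt_self hx)⟩
  have := h1.hasDerivAt
  simpa [FormalMultilinearSeries.ofScalars_apply_eq] using this

lemma F_zero (c : ℕ → ℝ) : F c 0 = c 0 := by
  rw [F, tsum_eq_single 0]
  · simp
  · intro k hk; simp [hk]

lemma exists_series {f : ℝ → ℝ} {ε : ℝ} (hε : 0 < ε) (hf : AnalyticOn ℝ f (Ico 0 ε)) :
    ∃ c : ℕ → ℝ, ∃ δ, 0 < δ ∧ δ ≤ ε ∧ Conv c δ ∧ ∀ r ∈ Ico 0 δ, f r = F c r := by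
  obtain ⟨p, R, hp⟩ := hf 0 ⟨le_rfl, hε⟩
  obtain ⟨δ, hδ0, hδ⟩ : ∃ δ : ℝ, 0 < δ ∧ ENNReal.ofReal δ ≤ R := by
    obtain ⟨q, h1, h2⟩ := ENNReal.lt_iff_exists_nnreal_btwn.1 hp.r_pos
    exact ⟨q, by exact_mod_cast h1, by simpa using h2.le⟩
  refine ⟨p.coeff, min δ ε, lt_min hδ0 hε, min_le_right _ _, ?_, ?_⟩
  · intro ρ h0 h1
    have h2 : ((ρ.toNNReal : NNReal) : ENNReal) < p.radius := by
      refine lt_of_lt_of_le ?_ (hδ.trans hp.r_le)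
      exact (ENNReal.ofReal_lt_ofReal_iff hδ0).2 (h1.trans_le (min_le_left _ _))
    have h3 := p.summable_norm_mul_pow h2
    simpa [FormalMultilinearSeries.norm_apply_eq_norm_coef, h0] using h3
  · intro r hr
    have h1 : r ∈ Metric.eball (0:ℝ) R := by
      refine Metric.eball_subset_eball hδ ?_
      rw [Metric.eball_ofReal]
      simpa [abs_of_nonneg hr.1] using hr.2.trans_le (min_le_left _ _)
    have h2 := hp.hasSum (y := r)
      (by rw [zero_add]; exact Or.inr ⟨hr.1, hr.2.trans_le (min_le_right _ _)⟩) h1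
    rw [zero_add] at h2
    rw [← h2.tsum_eq, F]
    refine tsum_congr fun k => ?_
    rw [FormalMultilinearSeries.apply_eq_pow_smul_coeff, smul_eq_mul, mul_comm]

end AnSol

theorem local_existence_uniqueness_analytic (lam μ₁ : ℝ) (n : ℕ) (hn2 : 2 ≤ n) :
    ∃ ε : ℝ, 0 < ε ∧
      ∃ h : ℝ → ℝ, IsAnalyticSolOn n lam μ₁ ε h ∧
        ∀ g : ℝ → ℝ, IsAnalyticSolOn n lam μ₁ ε g → Set.EqOn g h (Set.Ico 0 ε) := by
  have hm : (0:ℝ) < (n:ℝ) - 1 := by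
    have : (2:ℝ) ≤ n := by exact_mod_cast hn2
    linarith
  set m : ℝ := (n:ℝ) - 1 with hmdef
  obtain ⟨x, hx, hc, hb⟩ := AnSol.co_conv hm lam μ₁
  set a := AnSol.co m lam μ₁ with ha
  have hab : ∀ {r : ℝ}, r ∈ Ico 0 x → |r| < x := fun {r} hr => by
    rw [abs_of_nonneg hr.1]; exact hr.2
  have han : ∀ r ∈ Ico 0 x, AnalyticAt ℝ (fun y => 1 + AnSol.F a y) r := fun r hr =>
    analyticAt_const.add (hc.analyticAt (hab hr))
  refine ⟨x, hx, fun y => 1 + AnSol.F a y, ⟨fun r hr => (han r hr).analyticWithinAt, ?_, ?_, ?_⟩, ?_⟩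
  · intro r hr
    have hr' := hab ⟨hr.1.le, hr.2⟩
    constructor
    · obtain ⟨h1, h2⟩ := hc.derivs hr.1 hr.2
      have h3 := AnSol.res_hasSum m lam hc hr'
      simp only [ha, AnSol.ee_co hm, zero_mul] at h3
      have h4 := h3.unique hasSum_zero
      simp only [← ha] at h4
      rw [← hmdef, h1]
      linear_combination h4 + 2 * (1 + AnSol.F a r) * h2
    · have := (abs_le.1 (hb r hr')).1
      linarith
  · simp [AnSol.F_zero, ha, AnSol.co_zero]
  · have h1 := ((hc.deriv_zero hx).const_add 1).hasDerivWithinAt (s := Ici 0)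
    rw [h1.derivWithin (uniqueDiffOn_Ici 0 0 self_mem_Ici), ha, AnSol.co_one]
  · rintro g ⟨g1, g2, g3, g4⟩
    obtain ⟨c, δ, hδ, hδx, hcδ, hgc⟩ := AnSol.exists_series hx (g1.sub analyticOn_const (g := fun _ => (1:ℝ)))
    have hg : ∀ r ∈ Ico 0 δ, g r = 1 + AnSol.F c r := fun r hr => by
      have := hgc r hr
      simp only [Pi.sub_apply] at this
      linarith
    have c0 : c 0 = 0 := by
      have := hg 0 ⟨le_rfl, hδ⟩
      rw [g3, AnSol.F_zero] at this
      linarith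
    have c1 : c 1 = μ₁ := by
      have h1 := ((hcδ.deriv_zero hδ).const_add 1).hasDerivWithinAt (s := Ici 0)
      have h2 : HasDerivWithinAt g (c 1) (Ici 0) 0 := by
        refine h1.congr_of_eventuallyEq ?_ (hg 0 ⟨le_rfl, hδ⟩)
        filter_upwards [Ico_mem_nhdsGE hδ] with r hr using hg r hr
      rw [← g4, h2.derivWithin (uniqueDiffOn_Ici 0 0 self_mem_Ici)]
    have hsum : ∀ r, |r| < δ → HasSum (fun k => AnSol.ee m lam c k * r ^ k) _ :=
      fun r hr => AnSol.res_hasSum m lam hcδ hr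
    have hce : AnSol.Conv (AnSol.ee m lam c) δ := by
      intro ρ h0 h1
      have := (hsum ρ (by rwa [abs_of_nonneg h0])).summable.abs
      simpa [abs_mul, abs_pow, abs_of_nonneg h0] using this
    have hez : ∀ k, AnSol.ee m lam c k = 0 := by
      refine hce.eq_zero hδ fun r h0 h1 => ?_
      have h2 := (hsum r (by rwa [abs_of_pos h0])).tsum_eq
      rw [AnSol.F, h2]
      obtain ⟨d1, d2⟩ := hcδ.derivs h0 h1
      have hev : g =ᶠ[𝓝 r] fun y => 1 + AnSol.F c y := by
        filter_upwards [Ioo_mem_nhds h0 h1] with y hy using hg y ⟨hy.1.le, hy.2⟩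
      have ho := (g2 r ⟨h0, h1.trans_le hδx⟩).1
      rw [hev.deriv.deriv_eq, hev.deriv_eq, hev.eq_of_nhds, d1] at ho
      linear_combination ho - 2 * (1 + AnSol.F c r) * d2
    have hca : c = a := funext fun k => AnSol.co_unique hm lam μ₁ c0 c1 hez k
    have hga : ∀ r ∈ Ico 0 δ, g r = 1 + AnSol.F a r := by rw [← hca]; exact hg
    have hgan : AnalyticOnNhd ℝ g (Ioo 0 x) :=
      (isOpen_Ioo.analyticOn_iff_analyticOnNhd).1 (g1.mono Ioo_subset_Ico_self)
    have hhan : AnalyticOnNhd ℝ (fun y => 1 + AnSol.F a y) (Ioo 0 x) :=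
      fun r hr => han r ⟨hr.1.le, hr.2⟩
    have hmid : δ / 2 ∈ Ioo 0 δ := ⟨half_pos hδ, half_lt_self hδ⟩
    have heq := hgan.eqOn_of_preconnected_of_eventuallyEq hhan isPreconnected_Ioo
      (z₀ := δ / 2) ⟨hmid.1, hmid.2.trans_le hδx⟩ (by
        filter_upwards [Ioo_mem_nhds hmid.1 hmid.2] with y hy using hga y ⟨hy.1.le, hy.2⟩)
    intro r hr
    rcases hr.1.eq_or_lt with h | h
    · rw [← h]; exact hga 0 ⟨le_rfl, hδ⟩
    · exact heq ⟨h, hr.2⟩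
end
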